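/- For any integer s with n/2 < s ≤ n, the cardinality of any pair of antichains (T', T'') ∈ 𝒜_s satisfies |T'| + |T''| ≤ 1 + C(n+1, ⌊n/2⌋+1) − C(s+1, ⌊n/2⌋+1), where C(a,b) denotes the binomial coefficient. -/

import Mathlib

/-- The weight of a binary tuple: the number of its 1-components. -/
def bweight {n : ℕ} (α : Fin n → Bool) : ℕ :=
  (Finset.univ.filter fun i => α i = true).card

/-- The tuple `γ_s ∈ Bⁿ` whose first `n - s` components equal `0` and whose
last `s` components equal `1`. -/
def gammaTuple (n s : ℕ) : Fin n → Bool := fun i => decide (n - s ≤ (i : ℕ))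

/-- `T' < T''`: there are no tuples `a ∈ T'`, `b ∈ T''` with `a ≥ b`. -/
def PairBelow {n : ℕ} (T' T'' : Set (Fin n → Bool)) : Prop :=
  ∀ a ∈ T', ∀ b ∈ T'', ¬ b ≤ a

/-- A pair `(T', T'')` of antichains in `Bⁿ` with `T' < T''`. -/
def AntichainPair {n : ℕ} (T' T'' : Set (Fin n → Bool)) : Prop :=
  IsAntichain (· ≤ ·) T' ∧ IsAntichain (· ≤ ·) T'' ∧ PairBelow T' T''

/-- Membership of a pair of antichains in `𝒜_s`: a pair of antichains with
`T' < T''` and `γ_s ∈ T'`. -/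
def MemA {n : ℕ} (s : ℕ) (T' T'' : Set (Fin n → Bool)) : Prop :=
  AntichainPair T' T'' ∧ gammaTuple n s ∈ T'

/-- Membership of a pair of antichains in `𝒜'_t`: a pair of antichains with
`T' < T''` in which every tuple has weight at most `t`. -/
def MemA' {n : ℕ} (t : ℕ) (T' T'' : Set (Fin n → Bool)) : Prop :=
  AntichainPair T' T'' ∧ ∀ α ∈ T' ∪ T'', bweight α ≤ t

/-!
Read tuples as subsets of an `n`-element set, so that `γ_s` becomes an `s`-set `G`. No member of
`T'` or `T''` other than `G` lies below `G`, so it suffices to bound a union of two antichains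
inside the family of sets not contained in `G` by the number of members of that family of sizes
`⌊n/2⌋` and `⌊n/2⌋ + 1`.

That family splits into saturated chains whose smallest and largest ranks add up to `n` or `n + 1`.
Such a chain contains at most two members of a union of two antichains, and at least as many members
in the two middle levels as the smaller of `2` and its length. To get the chains, take a symmetric
chain decomposition of the subsets of the complement of `G` and delete `∅`, which raises the rank
sum of one chain by one; then add the elements of `G` one at a time, replacing a chain
`A₀ ⊂ ⋯ ⊂ Aₖ` by `A₀ ⊂ ⋯ ⊂ Aₖ ⊂ Aₖ ∪ {a}` and `A₀ ∪ {a} ⊂ ⋯ ⊂ Aₖ₋₁ ∪ {a}`, which raises every rank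
sum by one.
-/

open Finset

section Chains

variable {α β : Type*}

theorem injOn_of_isChain_of_strictMono [PartialOrder α] [Preorder β] {f : α → β} (hf : StrictMono f)
    {s : Set α} (hs : IsChain (· ≤ ·) s) : Set.InjOn f s := by
  intro a ha b hb hab
  by_contra hne
  rcases hs.total ha hb with h | h
  · exact (hf (h.lt_of_ne hne)).ne hab
  · exact (hf (h.lt_of_ne' hne)).ne' hab

theorem card_inter_union_le_two [DecidableEq α] {r : α → α → Prop} {C T U : Finset α}
    (hC : IsChain r (C : Set α)) (hT : IsAntichain r (T : Set α))
    (hU : IsAntichain r (U : Set α)) : #(C ∩ (T ∪ U)) ≤ 2 := by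
  have inter_le_one {V : Finset α} (hV : IsAntichain r (V : Set α)) : #(C ∩ V) ≤ 1 := by
    rw [card_le_one_iff_subsingleton, coe_inter]
    exact inter_subsingleton_of_isChain_of_isAntichain hC hV
  calc #(C ∩ (T ∪ U)) ≤ #(C ∩ T) + #(C ∩ U) := by
        rw [inter_union_distrib_left]
        exact card_union_le _ _
    _ ≤ 1 + 1 := add_le_add (inter_le_one hT) (inter_le_one hU)

end Chains

section Levels

variable {α : Type*}

theorem card_filter_powerset_card_mem_Ico (s : Finset α) (k : ℕ) :
    #{A ∈ s.powerset | #A ∈ Ico k (k + 2)} = (#s + 1).choose (k + 1) := by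
  classical
  have hlevels : {A ∈ s.powerset | #A ∈ Ico k (k + 2)} =
      s.powersetCard k ∪ s.powersetCard (k + 1) := by
    ext A
    simp only [mem_filter, mem_union, mem_powerset, mem_powersetCard, mem_Ico]
    grind
  rw [hlevels, card_union_of_disjoint (pairwise_disjoint_powersetCard s k.succ_ne_self.symm),
    card_powersetCard, card_powersetCard, Nat.choose_succ_succ']

theorem card_filter_powerset_sdiff_card_mem_Ico [DecidableEq α] {s G : Finset α} (hG : G ⊆ s)
    (k : ℕ) :
    #{A ∈ s.powerset \ G.powerset | #A ∈ Ico k (k + 2)} =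
      (#s + 1).choose (k + 1) - (#G + 1).choose (k + 1) := by
  have hsub : {A ∈ G.powerset | #A ∈ Ico k (k + 2)} ⊆ {A ∈ s.powerset | #A ∈ Ico k (k + 2)} :=
    filter_subset_filter _ (powerset_mono.2 hG)
  rw [← card_filter_powerset_card_mem_Ico, ← card_filter_powerset_card_mem_Ico,
    ← card_sdiff_of_subset hsub]
  congr 1
  grind

end Levels

section SymmChains

variable {α : Type*} {C S : Finset (Finset α)} {A t : Finset α} {a : α}
  {lo hi c : ℕ} {K : Set ℕ}

/-- A chain of finite sets with exactly one member of each size `lo, …, hi - 1`. The half-open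
interval makes the empty family such a chain whenever `hi ≤ lo`. -/
structure IsSaturatedChain (lo hi : ℕ) (C : Finset (Finset α)) : Prop where
  isChain : IsChain (· ⊆ ·) (C : Set (Finset α))
  image_card : C.image card = Ico lo hi

namespace IsSaturatedChain

theorem card_mem (h : IsSaturatedChain lo hi C) (hA : A ∈ C) : #A ∈ Ico lo hi :=
  h.image_card ▸ mem_image_of_mem _ hA

theorem injOn_card (h : IsSaturatedChain lo hi C) : Set.InjOn card (C : Set (Finset α)) :=
  injOn_of_isChain_of_strictMono card_strictMono h.isChain

theorem card_filter_card_mem (h : IsSaturatedChain lo hi C) (L : Finset ℕ) :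
    #{A ∈ C | #A ∈ L} = #(Ico lo hi ∩ L) := by
  classical
  rw [← h.image_card, ← filter_mem_eq_inter, filter_image,
    card_image_of_injOn (h.injOn_card.mono (filter_subset _ _))]

theorem subset_of_card_le (h : IsSaturatedChain lo hi C) (hA : A ∈ C) (ht : t ∈ C)
    (hcard : #A ≤ #t) : A ⊆ t :=
  (h.isChain.total hA ht).elim id fun htA ↦ (eq_of_subset_of_card_le htA hcard).symm.subset

variable [DecidableEq α]

theorem image_card_erase (h : IsSaturatedChain lo hi C) (hA : A ∈ C) :
    (C.erase A).image card = (Ico lo hi).erase #A := by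
  rw [← h.image_card]
  ext j
  simp only [mem_image, mem_erase]
  constructor
  · rintro ⟨B, ⟨hBA, hB⟩, rfl⟩
    exact ⟨fun hcard ↦ hBA (h.injOn_card hB hA hcard), B, hB, rfl⟩
  · rintro ⟨hj, B, hB, rfl⟩
    exact ⟨B, ⟨ne_of_apply_ne card hj, hB⟩, rfl⟩

theorem erase_bot (h : IsSaturatedChain lo hi C) (ht : t ∈ C) (htlo : #t = lo) :
    IsSaturatedChain (lo + 1) hi (C.erase t) where
  isChain := h.isChain.mono (erase_subset t C)
  image_card := by
    rw [h.image_card_erase ht, htlo]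
    grind

theorem erase_top (h : IsSaturatedChain lo (hi + 1) C) (ht : t ∈ C) (hthi : #t = hi) :
    IsSaturatedChain lo hi (C.erase t) where
  isChain := h.isChain.mono (erase_subset t C)
  image_card := by
    rw [h.image_card_erase ht, hthi]
    grind

theorem image_insert (h : IsSaturatedChain lo hi C) (ha : ∀ A ∈ C, a ∉ A) :
    IsSaturatedChain (lo + 1) (hi + 1) (C.image (insert a)) where
  isChain := by
    rw [coe_image]
    exact h.isChain.image_of_map_rel _ _ (insert a) fun _ _ ↦ insert_subset_insert a
  image_card := by
    calc (C.image (insert a)).image card = (C.image card).image (· + 1) := by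
          simp only [image_image]
          exact image_congr fun A hA ↦ card_insert_of_notMem (ha A hA)
      _ = Ico (lo + 1) (hi + 1) := by rw [h.image_card, image_add_right_Ico]

theorem insert_top (h : IsSaturatedChain lo (hi + 1) C) (ht : t ∈ C) (hthi : #t = hi)
    (ha : a ∉ t) : IsSaturatedChain lo (hi + 2) (insert (insert a t) C) where
  isChain := by
    rw [coe_insert]
    refine h.isChain.insert fun A hA _ ↦ .inr ?_
    have hAt : #A ≤ #t := hthi ▸ Nat.le_of_lt_succ (mem_Ico.1 (h.card_mem hA)).2
    exact (h.subset_of_card_le hA ht hAt).trans (subset_insert a t)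
  image_card := by
    have hlo : lo ≤ hi := hthi ▸ (mem_Ico.1 (h.card_mem ht)).1
    rw [Finset.image_insert, h.image_card, card_insert_of_notMem ha, hthi]
    grind

end IsSaturatedChain

/-- A saturated chain of finite sets whose smallest and largest ranks add up to `c`. The largest
rank is `hi - 1`, hence the `c + 1`; the empty family qualifies for every `c`. -/
def IsSymmChain (c : ℕ) (C : Finset (Finset α)) : Prop :=
  ∃ lo hi, lo + hi = c + 1 ∧ IsSaturatedChain lo hi C

namespace IsSymmChain

theorem empty (c : ℕ) : IsSymmChain c (∅ : Finset (Finset α)) :=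
  ⟨c + 1, 0, rfl, by simp, by simp⟩

theorem singleton_empty : IsSymmChain 0 ({∅} : Finset (Finset α)) :=
  ⟨0, 1, rfl, by simp, by simp⟩

variable [DecidableEq α]

theorem erase_empty (h : IsSymmChain c C) (hC : ∅ ∈ C) : IsSymmChain (c + 1) (C.erase ∅) := by
  obtain ⟨lo, hi, hsum, hsat⟩ := h
  have hlo : #(∅ : Finset α) = lo :=
    (Nat.le_zero.1 (mem_Ico.1 (hsat.card_mem hC)).1).symm
  exact ⟨lo + 1, hi, by omega, hsat.erase_bot hC hlo⟩

theorem exists_insert_top_and_image_erase (h : IsSymmChain c C) (hC : C.Nonempty)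
    (ha : ∀ A ∈ C, a ∉ A) :
    ∃ t ∈ C, IsSymmChain (c + 1) (insert (insert a t) C) ∧
      IsSymmChain (c + 1) ((C.erase t).image (insert a)) := by
  obtain ⟨lo, hi, hsum, hsat⟩ := h
  obtain ⟨A, hA⟩ := hC
  have hAcard := mem_Ico.1 (hsat.card_mem hA)
  obtain ⟨top, rfl⟩ : ∃ top, hi = top + 1 := ⟨hi - 1, by omega⟩
  obtain ⟨t, ht, htop⟩ : ∃ t ∈ C, #t = top := by
    rw [← mem_image, hsat.image_card, mem_Ico]
    omega
  exact ⟨t, ht, ⟨lo, top + 2, by omega, hsat.insert_top ht htop (ha t ht)⟩,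
    ⟨lo + 1, top + 1, by omega,
      (hsat.erase_top ht htop).image_insert fun A hA ↦ ha A (mem_of_mem_erase hA)⟩⟩

theorem card_inter_union_le {n : ℕ} (h : IsSymmChain c C) (hc : c = n ∨ c = n + 1)
    {T U : Finset (Finset α)} (hT : IsAntichain (· ⊆ ·) (T : Set (Finset α)))
    (hU : IsAntichain (· ⊆ ·) (U : Set (Finset α))) :
    #(C ∩ (T ∪ U)) ≤ #{A ∈ C | #A ∈ Ico (n / 2) (n / 2 + 2)} := by
  obtain ⟨lo, hi, hsum, hsat⟩ := h
  have hle_two : #(C ∩ (T ∪ U)) ≤ 2 := card_inter_union_le_two hsat.isChain hT hU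
  have hle_length : #(C ∩ (T ∪ U)) ≤ hi - lo := by
    rw [← Nat.card_Ico, ← hsat.image_card, card_image_of_injOn hsat.injOn_card]
    exact card_le_card inter_subset_left
  have hmiddle : min 2 (hi - lo) ≤ min hi (n / 2 + 2) - max lo (n / 2) := by omega
  rw [hsat.card_filter_card_mem, Ico_inter_Ico, Nat.card_Ico]
  exact (le_min hle_two hle_length).trans hmiddle

end IsSymmChain

variable [DecidableEq α]

/-- The union of `S` and its translate by the new element `a`: if no member of `S` contains `a`,
these are the sets that lie in `S` after removal of `a`. -/
def doubling (a : α) (S : Finset (Finset α)) : Finset (Finset α) :=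
  S ∪ S.image (insert a)

theorem mem_doubling (ha : ∀ A ∈ S, a ∉ A) : A ∈ doubling a S ↔ A.erase a ∈ S := by
  rw [doubling, mem_union, mem_image]
  constructor
  · rintro (hA | ⟨B, hB, rfl⟩)
    · rwa [erase_eq_of_notMem (ha A hA)]
    · rwa [erase_insert (ha B hB)]
  · intro hA
    by_cases haA : a ∈ A
    · exact .inr ⟨A.erase a, hA, insert_erase haA⟩
    · exact .inl (erase_eq_of_notMem haA ▸ hA)

theorem doubling_union (a : α) (S T : Finset (Finset α)) :
    doubling a (S ∪ T) = doubling a S ∪ doubling a T := by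
  simp only [doubling, image_union, union_union_union_comm]

theorem disjoint_doubling {T : Finset (Finset α)} (hST : Disjoint S T) (haS : ∀ A ∈ S, a ∉ A)
    (haT : ∀ A ∈ T, a ∉ A) : Disjoint (doubling a S) (doubling a T) :=
  disjoint_left.2 fun _ hAS hAT ↦
    disjoint_left.1 hST ((mem_doubling haS).1 hAS) ((mem_doubling haT).1 hAT)

/-- The family `S` is a disjoint union of symmetric chains with rank sums in `K`, encoded as
membership in the closure of the set of such chains under disjoint unions. -/
inductive HasSymmChainDecomp (K : Set ℕ) : Finset (Finset α) → Prop
  | of_chain {c : ℕ} {C : Finset (Finset α)} :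
      c ∈ K → IsSymmChain c C → HasSymmChainDecomp K C
  | union {S T : Finset (Finset α)} : Disjoint S T →
      HasSymmChainDecomp K S → HasSymmChainDecomp K T → HasSymmChainDecomp K (S ∪ T)

theorem IsSymmChain.hasSymmChainDecomp_doubling (h : IsSymmChain c C) (ha : ∀ A ∈ C, a ∉ A)
    (hc : c + 1 ∈ K) : HasSymmChainDecomp K (doubling a C) := by
  obtain rfl | hC := C.eq_empty_or_nonempty
  · exact .of_chain hc (.empty (c + 1))
  obtain ⟨t, ht, hlong, hshort⟩ := h.exists_insert_top_and_image_erase hC ha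
  have hsplit : doubling a C = insert (insert a t) C ∪ (C.erase t).image (insert a) := by
    rw [doubling, insert_union, ← union_insert, ← image_insert, insert_erase ht]
  have hdisj : Disjoint (insert (insert a t) C) ((C.erase t).image (insert a)) := by
    simp only [disjoint_right, mem_image, mem_erase, mem_insert, not_or]
    rintro _ ⟨A, ⟨hAt, hA⟩, rfl⟩
    refine ⟨fun heq ↦ hAt ?_, fun hmem ↦ ha _ hmem (mem_insert_self a A)⟩
    rw [← erase_insert (ha A hA), heq, erase_insert (ha t ht)]
  rw [hsplit]
  exact .union hdisj (.of_chain hc hlong) (.of_chain hc hshort)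

namespace HasSymmChainDecomp

protected theorem doubling (h : HasSymmChainDecomp K S) (ha : ∀ A ∈ S, a ∉ A) :
    HasSymmChainDecomp ((· + 1) '' K) (doubling a S) := by
  induction h with
  | of_chain hc hC => exact hC.hasSymmChainDecomp_doubling ha (Set.mem_image_of_mem _ hc)
  | @union S T hST _ _ ihS ihT =>
    have haS : ∀ A ∈ S, a ∉ A := fun A hA ↦ ha A (mem_union_left T hA)
    have haT : ∀ A ∈ T, a ∉ A := fun A hA ↦ ha A (mem_union_right S hA)
    rw [doubling_union]
    exact .union (disjoint_doubling hST haS haT) (ihS haS) (ihT haT)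

theorem erase_empty (h : HasSymmChainDecomp K S) :
    HasSymmChainDecomp (K ∪ (· + 1) '' K) (S.erase ∅) := by
  induction h with
  | @of_chain c C hc hC =>
    by_cases hmem : ∅ ∈ C
    · exact .of_chain (.inr (Set.mem_image_of_mem _ hc)) (hC.erase_empty hmem)
    · rw [erase_eq_of_notMem hmem]
      exact .of_chain (.inl hc) hC
  | union hST _ _ ihS ihT =>
    rw [erase_union_distrib]
    exact .union (hST.mono (erase_subset _ _) (erase_subset _ _)) ihS ihT

theorem card_inter_union_le {n : ℕ} (h : HasSymmChainDecomp {n, n + 1} S)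
    {T U : Finset (Finset α)} (hT : IsAntichain (· ⊆ ·) (T : Set (Finset α)))
    (hU : IsAntichain (· ⊆ ·) (U : Set (Finset α))) :
    #(S ∩ (T ∪ U)) ≤ #{A ∈ S | #A ∈ Ico (n / 2) (n / 2 + 2)} := by
  induction h with
  | of_chain hc hC => exact hC.card_inter_union_le hc hT hU
  | union hST _ _ ihS ihT =>
    rw [union_inter_distrib_right, filter_union,
      card_union_of_disjoint (hST.mono inter_subset_left inter_subset_left),
      card_union_of_disjoint (disjoint_filter_filter hST)]
    exact add_le_add ihS ihT

end HasSymmChainDecomp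

theorem hasSymmChainDecomp_powerset (s : Finset α) : HasSymmChainDecomp {#s} s.powerset := by
  induction s using Finset.induction_on with
  | empty => exact .of_chain rfl .singleton_empty
  | insert a s ha ih =>
    rw [card_insert_of_notMem ha, ← Set.image_singleton (f := (· + 1)), powerset_insert]
    exact ih.doubling fun A hA haA ↦ ha (mem_powerset.1 hA haA)

theorem hasSymmChainDecomp_powerset_sdiff_powerset {s G : Finset α} (hG : G ⊆ s) :
    HasSymmChainDecomp {#s, #s + 1} (s.powerset \ G.powerset) := by
  induction G using Finset.induction_on generalizing s with
  | empty =>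
    rw [powerset_empty, sdiff_singleton_eq_erase, ← Set.singleton_union,
      ← Set.image_singleton (f := (· + 1))]
    exact (hasSymmChainDecomp_powerset s).erase_empty
  | insert a G haG ih =>
    obtain ⟨has, hGs⟩ := insert_subset_iff.1 hG
    have ha : ∀ A ∈ (s.erase a).powerset \ G.powerset, a ∉ A := fun A hA haA ↦
      notMem_erase a s (mem_powerset.1 (mem_sdiff.1 hA).1 haA)
    have hfamily : s.powerset \ (insert a G).powerset =
        doubling a ((s.erase a).powerset \ G.powerset) := by
      ext A
      rw [mem_doubling ha]
      simp only [mem_sdiff, mem_powerset, ← subset_insert_iff, insert_erase has]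
    rw [hfamily, ← card_erase_add_one has, ← Set.image_pair (· + 1)]
    exact (ih (subset_erase.2 ⟨hGs, haG⟩)).doubling ha

theorem card_union_le_of_forall_subset_eq [Fintype α] {T U : Finset (Finset α)} {G : Finset α}
    (hT : IsAntichain (· ⊆ ·) (T : Set (Finset α)))
    (hU : IsAntichain (· ⊆ ·) (U : Set (Finset α))) (hG : ∀ A ∈ T ∪ U, A ⊆ G → A = G) :
    #(T ∪ U) ≤ 1 + (Fintype.card α + 1).choose (Fintype.card α / 2 + 1) -
      (#G + 1).choose (Fintype.card α / 2 + 1) := by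
  set n := Fintype.card α
  let S : Finset (Finset α) := univ.powerset \ G.powerset
  have hsub : (T ∪ U).erase G ⊆ S ∩ (T ∪ U) := by
    intro A hA
    obtain ⟨hne, hA⟩ := mem_erase.1 hA
    have hAG : ¬A ⊆ G := fun hAG ↦ hne (hG A hA hAG)
    simp only [S, mem_inter, mem_sdiff, mem_powerset]
    exact ⟨⟨subset_univ A, hAG⟩, hA⟩
  have hS : HasSymmChainDecomp {n, n + 1} S :=
    hasSymmChainDecomp_powerset_sdiff_powerset (subset_univ G)
  have hmono : (#G + 1).choose (n / 2 + 1) ≤ (n + 1).choose (n / 2 + 1) :=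
    Nat.choose_le_choose _ (Nat.succ_le_succ (card_le_univ G))
  calc #(T ∪ U) ≤ 1 + #((T ∪ U).erase G) := by
        have := pred_card_le_card_erase (s := T ∪ U) (a := G)
        omega
    _ ≤ 1 + #(S ∩ (T ∪ U)) := by gcongr
    _ ≤ 1 + #{A ∈ S | #A ∈ Ico (n / 2) (n / 2 + 2)} := by
        gcongr 1 + ?_
        exact hS.card_inter_union_le hT hU
    _ = 1 + ((n + 1).choose (n / 2 + 1) - (#G + 1).choose (n / 2 + 1)) := by
        rw [card_filter_powerset_sdiff_card_mem_Ico (subset_univ G), card_univ]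
    _ = 1 + (n + 1).choose (n / 2 + 1) - (#G + 1).choose (n / 2 + 1) :=
        (Nat.add_sub_assoc hmono 1).symm

end SymmChains

/-- The set of 1-positions of a binary tuple, as an embedding of `Bⁿ` into the subsets of `Fin n`
ordered by inclusion. -/
def ones {n : ℕ} : (Fin n → Bool) ↪o Finset (Fin n) :=
  .ofMapLEIff (fun x ↦ ({i | x i = true} : Finset (Fin n))) fun x y ↦ by
    simp [subset_iff, Pi.le_def, Bool.le_iff_imp]

theorem AntichainPair.disjoint {n : ℕ} {T' T'' : Set (Fin n → Bool)} (h : AntichainPair T' T'') :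
    Disjoint T' T'' :=
  Set.disjoint_left.2 fun x hx' hx'' ↦ h.2.2 x hx' x hx'' le_rfl

theorem bweight_gammaTuple {n s : ℕ} (hs : s ≤ n) : bweight (gammaTuple n s) = s := by
  have hzeros : #{i : Fin n | (i : ℕ) < n - s} = n - s := by
    rw [Fin.card_filter_val_lt, min_eq_right (Nat.sub_le n s)]
  have htotal := card_filter_add_card_filter_not (s := univ) fun i : Fin n ↦ (i : ℕ) < n - s
  simp only [not_lt, hzeros, card_univ, Fintype.card_fin] at htotal
  simp only [bweight, gammaTuple, decide_eq_true_eq]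
  omega

theorem card_pair_le_of_memA_general {n : ℕ} {T' T'' : Set (Fin n → Bool)}
    (h : AntichainPair T' T'') {γ : Fin n → Bool} (hγ : γ ∈ T') :
    T'.ncard + T''.ncard ≤
      1 + Nat.choose (n + 1) (n / 2 + 1) - Nat.choose (bweight γ + 1) (n / 2 + 1) := by
  lift T' to Finset (Fin n → Bool) using T'.toFinite
  lift T'' to Finset (Fin n → Bool) using T''.toFinite
  have hmin : ∀ x ∈ T' ∪ T'', x ≤ γ → x = γ := fun x hx hle ↦
    (mem_union.1 hx).elim (h.1.eq · hγ hle) fun hx ↦ absurd hle (h.2.2 γ hγ x hx)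
  have isAntichain_ones {T : Finset (Fin n → Bool)}
      (hT : IsAntichain (· ≤ ·) (T : Set (Fin n → Bool))) :
      IsAntichain (· ⊆ ·) (T.map ones.toEmbedding : Set (Finset (Fin n))) := by
    rw [coe_map]
    exact hT.image_embedding ones
  have hmin_ones : ∀ A ∈ T'.map ones.toEmbedding ∪ T''.map ones.toEmbedding,
      A ⊆ ones γ → A = ones γ := by
    rw [← map_union, forall_mem_map]
    exact fun x hx hle ↦ congrArg ones (hmin x hx (ones.le_iff_le.1 hle))
  have hbound := card_union_le_of_forall_subset_eq (isAntichain_ones h.1)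
    (isAntichain_ones h.2.1) hmin_ones
  rw [← map_union, card_map, card_union_of_disjoint (disjoint_coe.1 h.disjoint),
    Fintype.card_fin] at hbound
  rw [Set.ncard_coe_finset, Set.ncard_coe_finset]
  exact hbound

/-- For any integer `s` with `n/2 < s ≤ n`, the cardinality
of any pair of antichains `(T', T'') ∈ 𝒜_s` satisfies
`|T'| + |T''| ≤ 1 + C(n+1, ⌊n/2⌋+1) − C(s+1, ⌊n/2⌋+1)`. -/
theorem card_pair_le_of_memA {n s : ℕ} (hs1 : n < 2 * s) (hs2 : s ≤ n)
    (T' T'' : Set (Fin n → Bool)) (h : MemA s T' T'') :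
    T'.ncard + T''.ncard ≤
      1 + Nat.choose (n + 1) (n / 2 + 1) - Nat.choose (s + 1) (n / 2 + 1) := by
  simpa only [bweight_gammaTuple hs2] using card_pair_le_of_memA_general h.1 h.2
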